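/- Let \(h_1, h_2 : L_0 \to \mathbb{Z}\) be two height functions such that \(n+1\) divides \(h_1(x) - h_2(x)\) for every \(x \in L_0\). Then \(h_{\min}(x) = \min(h_1(x), h_2(x))\) and \(h_{\max}(x) = \max(h_1(x), h_2(x))\) are height functions. -/

import Mathlib

open scoped Classical

noncomputable section

/-- Vertices of the universal cover quiver: the lattice `L₀ = ℤⁿ`. -/
abbrev V (n : ℕ) := Fin n → ℤ

/-- The vectors `α₁, …, αₙ` (standard basis) and `α_{n+1} = -∑ αᵢ`. -/
def alphav (n : ℕ) (i : Fin (n + 1)) : V n :=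
  if h : (i : ℕ) < n then Pi.single ⟨i, h⟩ 1 else fun _ => -1

/-- An arrow of `Q̂` is a pair (source, type): the arrow `x → x + αᵢ`. -/
abbrev Arrow (n : ℕ) := V n × Fin (n + 1)

/-- The list of arrows of the path starting at `x` with list of types `l`. -/
def pathArrows (n : ℕ) : V n → List (Fin (n + 1)) → List (Arrow n)
  | _, [] => []
  | x, i :: l => (x, i) :: pathArrows n (x + alphav n i) l

/-- An elementary cycle: length `n+1`, pairwise distinct types, closed. -/
def IsElemCycle (n : ℕ) (l : List (Fin (n + 1))) : Prop :=
  l.length = n + 1 ∧ l.Nodup ∧ (l.map (alphav n)).sum = 0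

/-- A cut: every elementary cycle passes through exactly one arrow of `C`. -/
def IsCut (n : ℕ) (C : Set (Arrow n)) : Prop :=
  ∀ (x : V n) (l : List (Fin (n + 1))), IsElemCycle n l →
    ∃! a : Arrow n, a ∈ pathArrows n x l ∧ a ∈ C

/-- Height increment of a single arrow. -/
def hInc (n : ℕ) (C : Set (Arrow n)) (a : Arrow n) : ℤ :=
  if a ∈ C then -(n : ℤ) else 1

/-- Height increment along the path from `x` with types `l`. -/
def pathH (n : ℕ) (C : Set (Arrow n)) (x : V n) (l : List (Fin (n + 1))) : ℤ :=
  ((pathArrows n x l).map (hInc n C)).sum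

/-- A height function. -/
def IsHeight (n : ℕ) (h : V n → ℤ) : Prop :=
  h 0 = 0 ∧ ∀ (x : V n) (i : Fin (n + 1)),
    h (x + alphav n i) = h x + 1 ∨ h (x + alphav n i) = h x - n

/-- The cut associated to a height function. -/
def cutOf (n : ℕ) (h : V n → ℤ) : Set (Arrow n) :=
  {a | h (a.1 + alphav n a.2) = h a.1 - n}

/-- `L₁`-periodicity of a set of arrows. -/
def IsPeriodic (n : ℕ) (L1 : AddSubgroup (V n)) (C : Set (Arrow n)) : Prop :=
  ∀ a : Arrow n, ∀ y ∈ L1, (a ∈ C ↔ (a.1 + y, a.2) ∈ C)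

/-- The type of a periodic cut: the number of `L₁`-orbits of cut arrows of type `i`. -/
def typeCount (n : ℕ) (L1 : AddSubgroup (V n)) (C : Set (Arrow n)) (i : Fin (n + 1)) : ℕ :=
  Nat.card ((QuotientAddGroup.mk (s := L1)) '' {x : V n | (x, i) ∈ C})

end

/-!
Each increment of a height function lies between `-n` and `1`, so the difference of two height
functions moves by at most `n + 1` along an arrow. Where they disagree, divisibility separates them
by at least `n + 1`, hence the larger one stays at least as large across the arrow. So along each
arrow the minimum agrees, at both ends, with one of the two functions, and the maximum with the
other.
-/

namespace IsHeight

variable {n : ℕ} {f h h₁ h₂ : V n → ℤ}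

lemma apply_add_alphav_le_add_one (hh : IsHeight n h) (x : V n) (i : Fin (n + 1)) :
    h (x + alphav n i) ≤ h x + 1 := by
  rcases hh.2 x i with hstep | hstep <;> omega

lemma sub_le_apply_add_alphav (hh : IsHeight n h) (x : V n) (i : Fin (n + 1)) :
    h x - n ≤ h (x + alphav n i) := by
  rcases hh.2 x i with hstep | hstep <;> omega

lemma le_apply_add_alphav_of_lt (hh₁ : IsHeight n h₁) (hh₂ : IsHeight n h₂) {x : V n}
    (hdvd : (n : ℤ) + 1 ∣ h₁ x - h₂ x) (hlt : h₁ x < h₂ x) (i : Fin (n + 1)) :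
    h₁ (x + alphav n i) ≤ h₂ (x + alphav n i) := by
  have hgap : (n : ℤ) + 1 ≤ h₂ x - h₁ x :=
    Int.le_of_dvd (sub_pos.mpr hlt) (dvd_sub_comm.mp hdvd)
  calc
    h₁ (x + alphav n i) ≤ h₁ x + 1 := hh₁.apply_add_alphav_le_add_one x i
    _ ≤ h₂ x - n := by linarith
    _ ≤ h₂ (x + alphav n i) := hh₂.sub_le_apply_add_alphav x i

lemma le_on_arrow_total (hh₁ : IsHeight n h₁) (hh₂ : IsHeight n h₂) {x : V n}
    (hdvd : (n : ℤ) + 1 ∣ h₁ x - h₂ x) (i : Fin (n + 1)) :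
    (h₁ x ≤ h₂ x ∧ h₁ (x + alphav n i) ≤ h₂ (x + alphav n i)) ∨
      (h₂ x ≤ h₁ x ∧ h₂ (x + alphav n i) ≤ h₁ (x + alphav n i)) := by
  rcases lt_trichotomy (h₁ x) (h₂ x) with hlt | heq | hgt
  · exact .inl ⟨hlt.le, hh₁.le_apply_add_alphav_of_lt hh₂ hdvd hlt i⟩
  · exact (le_total _ _).imp (⟨heq.le, ·⟩) (⟨heq.ge, ·⟩)
  · exact .inr ⟨hgt.le, hh₂.le_apply_add_alphav_of_lt hh₁ (dvd_sub_comm.mp hdvd) hgt i⟩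

lemma of_forall_exists_eq_on_arrow
    (hf : ∀ (x : V n) (i : Fin (n + 1)), ∃ h, IsHeight n h ∧
      f x = h x ∧ f (x + alphav n i) = h (x + alphav n i)) :
    IsHeight n f := by
  constructor
  · obtain ⟨h, hh, hsource, -⟩ := hf 0 0
    rw [hsource, hh.1]
  · intro x i
    obtain ⟨h, hh, hsource, htarget⟩ := hf x i
    rw [hsource, htarget]
    exact hh.2 x i

protected lemma min (hh₁ : IsHeight n h₁) (hh₂ : IsHeight n h₂)
    (hdvd : ∀ x, (n : ℤ) + 1 ∣ h₁ x - h₂ x) :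
    IsHeight n (fun x => min (h₁ x) (h₂ x)) := by
  refine of_forall_exists_eq_on_arrow fun x i => ?_
  rcases hh₁.le_on_arrow_total hh₂ (hdvd x) i with ⟨hsource, htarget⟩ | ⟨hsource, htarget⟩
  · exact ⟨h₁, hh₁, min_eq_left hsource, min_eq_left htarget⟩
  · exact ⟨h₂, hh₂, min_eq_right hsource, min_eq_right htarget⟩

protected lemma max (hh₁ : IsHeight n h₁) (hh₂ : IsHeight n h₂)
    (hdvd : ∀ x, (n : ℤ) + 1 ∣ h₁ x - h₂ x) :
    IsHeight n (fun x => max (h₁ x) (h₂ x)) := by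
  refine of_forall_exists_eq_on_arrow fun x i => ?_
  rcases hh₁.le_on_arrow_total hh₂ (hdvd x) i with ⟨hsource, htarget⟩ | ⟨hsource, htarget⟩
  · exact ⟨h₂, hh₂, max_eq_right hsource, max_eq_right htarget⟩
  · exact ⟨h₁, hh₁, max_eq_left hsource, max_eq_left htarget⟩

end IsHeight

/-- pointwise min and max of two height functions whose difference is
divisible by `n+1` are again height functions. -/
theorem stmt_6 (n : ℕ) (hn : 1 ≤ n) (h₁ h₂ : V n → ℤ)
    (hh₁ : IsHeight n h₁) (hh₂ : IsHeight n h₂)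
    (hdvd : ∀ x : V n, ((n : ℤ) + 1) ∣ (h₁ x - h₂ x)) :
    IsHeight n (fun x => min (h₁ x) (h₂ x)) ∧
    IsHeight n (fun x => max (h₁ x) (h₂ x)) :=
  ⟨hh₁.min hh₂ hdvd, hh₁.max hh₂ hdvd⟩
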